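/- There exist universal constants C, C', c > 0 such that the following holds. Let x ∈ ℝ^n, let a₁, …, a_m be independent standard Gaussian vectors a_ℓ ∼ N(0, I_n), and let y_ℓ = |a_ℓ^T x|² for ℓ = 1, …, m. If m ≥ C n, then with probability at least 1 − C' e^{−c m}, the matrix X = x x^T is the unique solution of the PhaseLift problem: minimize trace(Z) over symmetric positive semidefinite matrices Z ∈ ℝ^{n×n} subject to ⟨a_ℓ a_ℓ^T, Z⟩ = y_ℓ for all ℓ = 1, …, m. -/

import Mathlib

noncomputable section

open scoped BigOperators ENNReal NNReal
open Matrix MeasureTheory ProbabilityTheory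

/-- The law of `m` independent standard Gaussian vectors `a_ℓ ∼ N(0, I_n)`. -/
def gaussianVectors (n m : ℕ) : Measure (Fin m → Fin n → ℝ) :=
  Measure.pi fun _ : Fin m => Measure.pi fun _ : Fin n => gaussianReal 0 1

open Filter Module Topology
open scoped RealInnerProductSpace

/-!
Let `u` be the unit vector in the direction of `x`. The matrix `Y = ∑ ℓ, φ(⟨a_ℓ, u⟩) a_ℓ a_ℓᵀ`,
with a bounded weight `φ` that is negative for small and positive for large arguments, is an
approximate dual certificate: it is positive at `u`, negative definite on the orthogonal complement
of `u`, and nearly decouples the two. Write a feasible `Z` of trace at most `‖x‖²` as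
`∑ k, b_k b_kᵀ` and split each `b_k` into its component along `u` and a rest `w_k`. Feasibility
tested against `Y` bounds the loss in the `u uᵀ` coefficient by a small multiple of the norm of the
off-diagonal part of `Z`, while feasibility tested in `ℓ¹` bounds that norm by a multiple of the
loss. Hence the loss vanishes, and with it all `w_k`.

The certificate conditions at a fixed direction are bounds on empirical means of quadratically
growing functions of a Gaussian vector, so they hold up to exponentially small probability. An
`η`-net of the unit sphere of `uᗮ` has at most `(1 + 2 / η) ^ n` points, which a union bound absorbs
when `m ≥ C n`, and continuity extends the conditions from the net to the whole of `uᗮ`.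
-/

section Chernoff

variable {Ω : Type*} [MeasurableSpace Ω] {μ : Measure Ω} [IsProbabilityMeasure μ] {f : Ω → ℝ}

lemma eventually_mgf_lt_one (hf : 0 ∈ interior (integrableExpSet f μ)) (hneg : μ[f] < 0) :
    ∀ᶠ s in 𝓝[>] 0, mgf f μ s < 1 := by
  have hderiv : HasDerivWithinAt (mgf f μ) (μ[f]) (Set.Ioi 0) 0 := by
    simpa using (hasDerivAt_mgf hf).hasDerivWithinAt
  rw [hasDerivWithinAt_iff_tendsto_slope' (by simp)] at hderiv
  filter_upwards [hderiv.eventually_lt_const hneg, self_mem_nhdsWithin] with s hslope hs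
  rw [slope_def_field, mgf_zero, sub_zero, div_lt_iff₀ hs] at hslope
  linarith

lemma measureReal_pi_sum_nonneg_le {ι : Type*} [Fintype ι] {s : ℝ} (hs : 0 ≤ s)
    (hfm : Measurable f) (hint : s ∈ integrableExpSet f μ) :
    (Measure.pi fun _ : ι => μ).real {X | 0 ≤ ∑ i, f (X i)} ≤ mgf f μ s ^ Fintype.card ι := by
  have hindep : iIndepFun (fun i (X : ι → Ω) => f (X i)) (Measure.pi fun _ : ι => μ) :=
    iIndepFun_pi fun _ => hfm.aemeasurable
  have hlaw (i : ι) : mgf (fun X : ι → Ω => f (X i)) (Measure.pi fun _ : ι => μ) s = mgf f μ s :=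
    integral_comp_eval (μ := fun _ : ι => μ) (f := fun x => Real.exp (s * f x)) (by fun_prop)
  have hsum : Integrable (fun X : ι → Ω => Real.exp (s * ∑ i, f (X i)))
      (Measure.pi fun _ : ι => μ) := by
    simp only [Finset.mul_sum, Real.exp_sum]
    exact Integrable.fintype_prod fun _ => hint
  calc
    _ ≤ _ := measure_ge_le_exp_mul_mgf 0 hs hsum
    _ = _ := by
      simp only [mul_zero, Real.exp_zero, one_mul]
      rw [← Finset.sum_fn, hindep.mgf_sum (fun i => by fun_prop)]
      simp [hlaw]

lemma eventually_measureReal_pi_sum_nonneg_le (hfm : Measurable f)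
    (hf : 0 ∈ interior (integrableExpSet f μ)) (hneg : μ[f] < 0) :
    ∀ᶠ κ in 𝓝[>] (0 : ℝ), ∀ m : ℕ,
      (Measure.pi fun _ : Fin m => μ).real {X | 0 ≤ ∑ i, f (X i)} ≤ Real.exp (-κ * m) := by
  obtain ⟨s, ⟨hlt, hs⟩, hint⟩ := ((eventually_mgf_lt_one hf hneg).and self_mem_nhdsWithin).and
    (nhdsWithin_le_nhds (mem_interior_iff_mem_nhds.1 hf)) |>.exists
  have hpos : 0 < mgf f μ s := mgf_pos hint
  filter_upwards [nhdsWithin_le_nhds (gt_mem_nhds (neg_pos.2 (Real.log_neg hpos hlt)))]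
    with κ hκ m
  calc
    _ ≤ mgf f μ s ^ m := by simpa using measureReal_pi_sum_nonneg_le (ι := Fin m) hs.le hfm hint
    _ ≤ Real.exp (-κ) ^ m := by
      gcongr
      rw [← Real.log_le_iff_le_exp hpos]
      linarith
    _ = Real.exp (-κ * m) := by rw [← Real.exp_nat_mul, mul_comm]

end Chernoff

section GaussianTails

variable {E : Type*} [NormedAddCommGroup E] [NormedSpace ℝ E] [MeasurableSpace E] [BorelSpace E]
  [CompleteSpace E] [SecondCountableTopology E] {μ : Measure E} [IsGaussian μ]

lemma zero_mem_interior_integrableExpSet_of_abs_le_sq {f : E → ℝ} (hfm : Measurable f) {A : ℝ}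
    (hfA : ∀ x, |f x| ≤ A * (1 + ‖x‖ ^ 2)) :
    0 ∈ interior (integrableExpSet f μ) := by
  obtain ⟨C, hC, hint⟩ := IsGaussian.exists_integrable_exp_sq μ
  have hA : Tendsto (fun t : ℝ => |t| * A) (𝓝 0) (𝓝 0) :=
    Continuous.tendsto' (by fun_prop) _ _ (by simp)
  rw [mem_interior_iff_mem_nhds]
  filter_upwards [hA.eventually_le_const hC] with t ht
  refine Integrable.mono' (hint.const_mul (Real.exp C)) (by fun_prop) (ae_of_all _ fun x => ?_)
  rw [Real.norm_eq_abs, Real.abs_exp, ← Real.exp_add, Real.exp_le_exp]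
  calc
    t * f x ≤ |t| * |f x| := by rw [← abs_mul]; exact le_abs_self _
    _ ≤ |t| * (A * (1 + ‖x‖ ^ 2)) := by gcongr; exact hfA x
    _ ≤ C * (1 + ‖x‖ ^ 2) := by rw [← mul_assoc]; gcongr
    _ = C + C * ‖x‖ ^ 2 := by ring

/-- The statistic `f` grows at most quadratically and its mean under `μ` is less than `c`. For
Gaussian `μ` its empirical means then exceed `c` with exponentially small probability only. -/
structure IsQuadraticMeanLT (μ : Measure E) (f : E → ℝ) (c : ℝ) : Prop where
  measurable : Measurable f
  abs_le_sq : ∀ x, |f x| ≤ ‖x‖ ^ 2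
  integral_lt : ∫ x, f x ∂μ < c

lemma eventually_measureReal_pi_mul_le_sum_le {f : E → ℝ} {c : ℝ} (hf : IsQuadraticMeanLT μ f c) :
    ∀ᶠ κ in 𝓝[>] (0 : ℝ), ∀ m : ℕ,
      (Measure.pi fun _ : Fin m => μ).real {X | c * m ≤ ∑ i, f (X i)} ≤ Real.exp (-κ * m) := by
  have hfm := hf.measurable
  have hint : Integrable f μ :=
    Integrable.mono' (IsGaussian.memLp_two_id (μ := μ)).integrable_norm_pow'
      hfm.aestronglyMeasurable (ae_of_all _ hf.abs_le_sq)
  have hbound (x : E) : |f x - c| ≤ (1 + |c|) * (1 + ‖x‖ ^ 2) :=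
    (abs_sub _ _).trans (by nlinarith [hf.abs_le_sq x, abs_nonneg c, sq_nonneg ‖x‖])
  have hneg : ∫ x, (f x - c) ∂μ < 0 := by
    rw [integral_sub hint (integrable_const c)]
    simpa using hf.integral_lt
  simpa [mul_comm c] using eventually_measureReal_pi_sum_nonneg_le (hfm.sub_const c)
    (zero_mem_interior_integrableExpSet_of_abs_le_sq (by fun_prop) hbound) hneg

lemma eventually_measureReal_pi_exists_mul_le_sum_le {σ : Type*} [Fintype σ] {f : σ → E → ℝ}
    {c : σ → ℝ} (hf : ∀ j, IsQuadraticMeanLT μ (f j) (c j)) :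
    ∀ᶠ κ in 𝓝[>] (0 : ℝ), ∀ m : ℕ,
      (Measure.pi fun _ : Fin m => μ).real {X | ∃ j, c j * m ≤ ∑ i, f j (X i)} ≤
        Fintype.card σ * Real.exp (-κ * m) := by
  have htail := eventually_all.2 fun j => eventually_measureReal_pi_mul_le_sum_le (hf j)
  filter_upwards [htail] with κ hκ m
  calc
    _ = (Measure.pi fun _ : Fin m => μ).real (⋃ j, {X | c j * m ≤ ∑ i, f j (X i)}) := by
      rw [Set.ofPred_exists]
    _ ≤ ∑ j, (Measure.pi fun _ : Fin m => μ).real {X | c j * m ≤ ∑ i, f j (X i)} :=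
      measureReal_iUnion_fintype_le _
    _ ≤ ∑ _j : σ, Real.exp (-κ * m) := Finset.sum_le_sum fun j _ => hκ j m
    _ = Fintype.card σ * Real.exp (-κ * m) := by simp

end GaussianTails

section Transfer

lemma measureReal_pi_preimage_le {ι Ω Ω' : Type*} [Fintype ι] [MeasurableSpace Ω]
    [MeasurableSpace Ω'] {μ : Measure Ω} [IsProbabilityMeasure μ] {T : Ω → Ω'} (hT : Measurable T)
    (S : Set (ι → Ω')) :
    (Measure.pi fun _ : ι => μ).real {X | (fun i => T (X i)) ∈ S} ≤
      (Measure.pi fun _ : ι => μ.map T).real S := by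
  have := Measure.isProbabilityMeasure_map (μ := μ) hT.aemeasurable
  have hpi : MeasurePreserving (fun (X : ι → Ω) i => T (X i)) (Measure.pi fun _ => μ)
      (Measure.pi fun _ => μ.map T) :=
    measurePreserving_pi _ _ fun _ => ⟨hT, rfl⟩
  refine ENNReal.toReal_mono (measure_ne_top _ _) ?_
  rw [← hpi.map_eq]
  exact Measure.le_map_apply hpi.aemeasurable S

end Transfer

section Marginals

variable {E : Type*} [NormedAddCommGroup E] [InnerProductSpace ℝ E] [FiniteDimensional ℝ E]
  [MeasurableSpace E] [BorelSpace E]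

lemma map_inner_stdGaussian {u : E} (hu : ‖u‖ = 1) :
    (stdGaussian E).map (fun a => ⟪a, u⟫) = gaussianReal 0 1 := by
  have h := IsGaussian.map_eq_gaussianReal (μ := stdGaussian E) (innerSL ℝ u)
  rw [integral_strongDual_stdGaussian, variance_dual_stdGaussian, innerSL_apply_norm, hu] at h
  simpa [real_inner_comm] using h

lemma indepFun_inner_stdGaussian {u w : E} (huw : ⟪u, w⟫ = 0) :
    IndepFun (fun a => ⟪a, u⟫) (fun a => ⟪a, w⟫) (stdGaussian E) := by
  refine HasGaussianLaw.indepFun_of_covariance_eq_zero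
    ⟨isGaussian_map (((innerSL ℝ).flip u).prod ((innerSL ℝ).flip w))⟩ ?_
  rw [← huw, ← innerSL_apply_apply ℝ u w, ← covarianceBilin_stdGaussian,
    covarianceBilin_apply_eq_cov IsGaussian.memLp_two_id]
  simp [real_inner_comm]

lemma map_inner_prodMk_inner_stdGaussian {u w : E} (hu : ‖u‖ = 1) (hw : ‖w‖ = 1)
    (huw : ⟪u, w⟫ = 0) :
    (stdGaussian E).map (fun a => (⟪a, u⟫, ⟪a, w⟫)) =
      (gaussianReal 0 1).prod (gaussianReal 0 1) := by
  rw [(indepFun_iff_map_prod_eq_prod_map_map (by fun_prop) (by fun_prop)).1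
    (indepFun_inner_stdGaussian huw), map_inner_stdGaussian hu, map_inner_stdGaussian hw]

end Marginals

section Moments

lemma integral_pos_of_countable_zeros {Ω : Type*} [MeasurableSpace Ω] {μ : Measure Ω} [NeZero μ]
    [NullSingletonClass μ] {f : Ω → ℝ} (hf : 0 ≤ f) (hint : Integrable f μ)
    (hzeros : {x | f x = 0}.Countable) : 0 < ∫ x, f x ∂μ := by
  rw [integral_pos_iff_support_of_nonneg hf hint, pos_iff_ne_zero]
  have hsupp : Function.support f =ᵐ[μ] Set.univ := by
    rw [eventuallyEq_univ]
    exact hzeros.ae_notMem μ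
  rw [measure_congr hsupp]
  exact NeZero.ne _

/-- The weight `φ` of the dual certificate `∑ ℓ, φ(⟨a_ℓ, u⟩) a_ℓ a_ℓᵀ` at a unit vector `u`. For a
standard Gaussian `g`, it is negatively correlated with `1` and positively correlated with `g ^ 2`,
and being bounded it keeps all the weighted sums below concentrated. -/
def dualWeight (g : ℝ) : ℝ := (g ^ 2 - 1) / (g ^ 2 + 1)

@[fun_prop]
lemma measurable_dualWeight : Measurable dualWeight := by
  unfold dualWeight
  fun_prop

lemma abs_dualWeight_le_one (g : ℝ) : |dualWeight g| ≤ 1 := by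
  rw [dualWeight, abs_div, abs_of_pos (by positivity : 0 < g ^ 2 + 1), div_le_one (by positivity),
    abs_le]
  constructor <;> linarith [sq_nonneg g]

lemma abs_dualWeight_mul_le (g a : ℝ) : |dualWeight g * a| ≤ |a| := by
  rw [abs_mul]
  exact mul_le_of_le_one_left (abs_nonneg a) (abs_dualWeight_le_one g)

lemma dualWeight_mul_sq (g : ℝ) : dualWeight g * g ^ 2 = g ^ 2 - 1 - dualWeight g := by
  unfold dualWeight
  field_simp
  ring

lemma integrable_dualWeight_mul {μ : Measure ℝ} {f : ℝ → ℝ} (hf : Integrable f μ) :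
    Integrable (fun g => dualWeight g * f g) μ :=
  hf.bdd_mul (by fun_prop) (ae_of_all _ abs_dualWeight_le_one)

lemma integrable_id_gaussianReal : Integrable (fun g : ℝ => g) (gaussianReal 0 1) :=
  IsGaussian.memLp_two_id.integrable (by norm_num)

lemma integrable_sq_gaussianReal : Integrable (fun g : ℝ => g ^ 2) (gaussianReal 0 1) :=
  IsGaussian.memLp_two_id.integrable_sq

lemma integrable_sq_sub_one_gaussianReal :
    Integrable (fun g : ℝ => g ^ 2 - 1) (gaussianReal 0 1) :=
  integrable_sq_gaussianReal.sub (integrable_const 1)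

lemma integrable_dualWeight : Integrable dualWeight (gaussianReal 0 1) := by
  simpa using integrable_dualWeight_mul (integrable_const (1 : ℝ))

lemma integral_sq_gaussianReal : ∫ g, g ^ 2 ∂(gaussianReal 0 1) = 1 := by
  have h := variance_id_gaussianReal (μ := 0) (v := 1)
  rw [variance_of_integral_eq_zero (by fun_prop) (by simp)] at h
  simpa using h

lemma integral_sq_sub_one_gaussianReal : ∫ g, (g ^ 2 - 1) ∂(gaussianReal 0 1) = 0 := by
  rw [integral_sub integrable_sq_gaussianReal (integrable_const 1), integral_sq_gaussianReal]
  simp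

lemma integral_dualWeight_mul_sq :
    ∫ g, dualWeight g * g ^ 2 ∂(gaussianReal 0 1) = -∫ g, dualWeight g ∂(gaussianReal 0 1) := by
  simp_rw [dualWeight_mul_sq]
  rw [integral_sub integrable_sq_sub_one_gaussianReal integrable_dualWeight,
    integral_sq_sub_one_gaussianReal, zero_sub]

lemma integral_dualWeight_neg : ∫ g, dualWeight g ∂(gaussianReal 0 1) < 0 := by
  have := nullSingletonClass_gaussianReal (μ := 0) one_ne_zero
  have hint : Integrable (fun g : ℝ => (g ^ 2 - 1) / 2) (gaussianReal 0 1) :=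
    integrable_sq_sub_one_gaussianReal.div_const 2
  have hgap (g : ℝ) : (g ^ 2 - 1) / 2 - dualWeight g = (g ^ 2 - 1) ^ 2 / (2 * (g ^ 2 + 1)) := by
    unfold dualWeight
    field_simp
    ring
  have hzeros : {g : ℝ | (g ^ 2 - 1) / 2 - dualWeight g = 0} ⊆ {1, -1} := by
    intro g hg
    rw [Set.mem_ofPred_eq, hgap, div_eq_zero_iff, or_iff_left (by positivity), sq_eq_zero_iff,
      sub_eq_zero, sq_eq_one_iff] at hg
    simpa using hg
  have hpos : 0 < ∫ g, ((g ^ 2 - 1) / 2 - dualWeight g) ∂(gaussianReal 0 1) :=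
    integral_pos_of_countable_zeros (fun g => by simp only [hgap, Pi.zero_apply]; positivity)
      (hint.sub integrable_dualWeight) ((Set.toFinite _).subset hzeros).countable
  rw [integral_sub hint integrable_dualWeight, integral_div, integral_sq_sub_one_gaussianReal]
    at hpos
  linarith

lemma integral_abs_gaussianReal_pos : 0 < ∫ g, |g| ∂(gaussianReal 0 1) :=
  have := nullSingletonClass_gaussianReal (μ := 0) one_ne_zero
  integral_pos_of_countable_zeros (fun _ => abs_nonneg _) integrable_id_gaussianReal.abs (by simp)

end Moments

section MeasurementForms

variable {ι : Type*} [Fintype ι]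

/-- The seminorm `h ↦ ∑ ℓ, |g ℓ| * |h ℓ|` on measurement vectors. -/
def absPairing (g : EuclideanSpace ℝ ι) : Seminorm ℝ (EuclideanSpace ℝ ι) :=
  Seminorm.of (fun h => ∑ ℓ, |g ℓ| * |h ℓ|)
    (fun h h' => by
      rw [← Finset.sum_add_distrib]
      refine Finset.sum_le_sum fun ℓ _ => ?_
      rw [← mul_add]
      exact mul_le_mul_of_nonneg_left (abs_add_le _ _) (abs_nonneg _))
    (fun c h => by simp [abs_mul, Finset.mul_sum, mul_left_comm])

@[simp]
lemma absPairing_apply (g h : EuclideanSpace ℝ ι) : absPairing g h = ∑ ℓ, |g ℓ| * |h ℓ| := rfl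

lemma absPairing_le_norm_mul_norm (g h : EuclideanSpace ℝ ι) : absPairing g h ≤ ‖g‖ * ‖h‖ := by
  simp only [absPairing_apply, EuclideanSpace.norm_eq]
  simpa using Real.sum_mul_le_sqrt_mul_sqrt Finset.univ (fun ℓ => |g ℓ|) fun ℓ => |h ℓ|

/-- The bilinear form `(g, h) ↦ ∑ ℓ, y ℓ * (g ℓ * h ℓ)` on measurement vectors. -/
def weightedForm (y : ι → ℝ) : LinearMap.BilinForm ℝ (EuclideanSpace ℝ ι) :=
  LinearMap.mk₂ ℝ (fun g h => ∑ ℓ, y ℓ * (g ℓ * h ℓ))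
    (fun g g' h => by simp [add_mul, mul_add, Finset.sum_add_distrib])
    (fun c g h => by simp [Finset.mul_sum, mul_left_comm, mul_assoc])
    (fun g h h' => by simp [mul_add, Finset.sum_add_distrib])
    (fun c g h => by simp [Finset.mul_sum, mul_left_comm])

@[simp]
lemma weightedForm_apply (y : ι → ℝ) (g h : EuclideanSpace ℝ ι) :
    weightedForm y g h = ∑ ℓ, y ℓ * (g ℓ * h ℓ) := rfl

lemma abs_weightedForm_le_norm_mul_norm {y : ι → ℝ} (hy : ∀ ℓ, |y ℓ| ≤ 1)
    (g h : EuclideanSpace ℝ ι) : |weightedForm y g h| ≤ ‖g‖ * ‖h‖ :=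
  calc
    _ ≤ ∑ ℓ, |y ℓ * (g ℓ * h ℓ)| := Finset.abs_sum_le_sum_abs _ _
    _ ≤ absPairing g h := Finset.sum_le_sum fun ℓ _ => by
      rw [abs_mul, abs_mul]
      exact mul_le_of_le_one_left (by positivity) (hy ℓ)
    _ ≤ ‖g‖ * ‖h‖ := absPairing_le_norm_mul_norm g h

end MeasurementForms

section GoodDirections

lemma norm_le_two_mul_sqrt {m : ℕ} {h : EuclideanSpace ℝ (Fin m)}
    (hh : ∑ ℓ, h ℓ ^ 2 ≤ 4 * m) : ‖h‖ ≤ 2 * √m := by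
  rw [EuclideanSpace.norm_eq, Real.sqrt_le_left (by positivity), mul_pow, Real.sq_sqrt (by simp)]
  simp only [Real.norm_eq_abs, sq_abs]
  linarith

/-- The measurements `g ℓ = ⟨a_ℓ, u⟩` of the signal direction `u` have the expected size, and the
certificate with weights `y` is positive at `u`. -/
structure IsGoodCenter {m : ℕ} (y : Fin m → ℝ) (g : EuclideanSpace ℝ (Fin m)) (δ : ℝ) : Prop where
  norm_le : ‖g‖ ≤ 2 * √m
  le_form : δ * m ≤ weightedForm y g g

/-- The measurements `h ℓ = ⟨a_ℓ, w⟩` of a direction `w` orthogonal to the signal direction have the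
expected size, the certificate with weights `y` is negative at `w` and nearly decouples it from the
signal direction, and `h` does not concentrate where the measurements `g` of the signal direction
are small. -/
structure IsGoodDirection {m : ℕ} (y : Fin m → ℝ) (g h : EuclideanSpace ℝ (Fin m)) (δ ε : ℝ) :
    Prop where
  norm_le : ‖h‖ ≤ 2 * √m
  form_self_le : weightedForm y h h ≤ -(δ * m)
  abs_form_le : |weightedForm y g h| ≤ ε * m
  le_absPairing : δ * m ≤ absPairing g h

lemma isQuadraticMeanLT_sq : IsQuadraticMeanLT (gaussianReal 0 1) (fun g => g ^ 2) 4 where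
  measurable := by fun_prop
  abs_le_sq := by simp
  integral_lt := by norm_num [integral_sq_gaussianReal]

lemma isQuadraticMeanLT_neg_dualWeight_mul_sq {δ : ℝ}
    (hδ : δ < -∫ g, dualWeight g ∂(gaussianReal 0 1)) :
    IsQuadraticMeanLT (gaussianReal 0 1) (fun g => -(dualWeight g * g ^ 2)) (-δ) where
  measurable := by fun_prop
  abs_le_sq x := by
    rw [abs_neg, Real.norm_eq_abs, ← abs_pow]
    exact abs_dualWeight_mul_le x (x ^ 2)
  integral_lt := by rwa [integral_neg, integral_dualWeight_mul_sq, neg_lt_neg_iff]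

lemma eventually_measureReal_not_isGoodCenter_le {δ : ℝ}
    (hδ : δ < -∫ g, dualWeight g ∂(gaussianReal 0 1)) :
    ∀ᶠ κ in 𝓝[>] (0 : ℝ), ∀ m : ℕ,
      (Measure.pi fun _ : Fin m => gaussianReal 0 1).real
          {g | ¬ IsGoodCenter (fun ℓ => dualWeight (g ℓ)) (WithLp.toLp 2 g) δ} ≤
        2 * Real.exp (-κ * m) := by
  have htail := eventually_measureReal_pi_exists_mul_le_sum_le
    (Fin.forall_fin_two.2 ⟨isQuadraticMeanLT_sq, isQuadraticMeanLT_neg_dualWeight_mul_sq hδ⟩ :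
      ∀ j, IsQuadraticMeanLT (gaussianReal 0 1)
        (![fun g => g ^ 2, fun g => -(dualWeight g * g ^ 2)] j) (![4, -δ] j))
  filter_upwards [htail] with κ hκ m
  refine (measureReal_mono fun g => ?_).trans (hκ m)
  contrapose!
  intro hg
  obtain ⟨hsq, hweight⟩ :
      ∑ ℓ, g ℓ ^ 2 < 4 * m ∧ ∑ ℓ, -(dualWeight (g ℓ) * g ℓ ^ 2) < -δ * m := by
    simpa [Fin.exists_fin_two] using hg
  rw [Finset.sum_neg_distrib] at hweight
  refine not_not.2 ⟨norm_le_two_mul_sqrt hsq.le, ?_⟩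
  simp only [weightedForm_apply, ← sq]
  linarith

section Product

local notation "γ₂" => Measure.prod (gaussianReal 0 1) (gaussianReal 0 1)

lemma isQuadraticMeanLT_sq_snd : IsQuadraticMeanLT γ₂ (fun p => p.2 ^ 2) 4 where
  measurable := by fun_prop
  abs_le_sq p := by
    rw [abs_sq]
    exact sq_le_sq.2 ((norm_snd_le p).trans (le_abs_self _))
  integral_lt := by
    rw [integral_fun_snd (fun h : ℝ => h ^ 2), integral_sq_gaussianReal]
    norm_num

lemma isQuadraticMeanLT_dualWeight_mul_sq_snd {δ : ℝ}
    (hδ : δ < -∫ g, dualWeight g ∂(gaussianReal 0 1)) :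
    IsQuadraticMeanLT γ₂ (fun p => dualWeight p.1 * p.2 ^ 2) (-δ) where
  measurable := by fun_prop
  abs_le_sq p := (abs_dualWeight_mul_le _ _).trans (isQuadraticMeanLT_sq_snd.abs_le_sq p)
  integral_lt := by
    rw [integral_prod_mul dualWeight fun h : ℝ => h ^ 2, integral_sq_gaussianReal]
    linarith

lemma abs_fst_mul_snd_le_sq_norm (p : ℝ × ℝ) : |p.1 * p.2| ≤ ‖p‖ ^ 2 := by
  rw [abs_mul, sq]
  exact mul_le_mul (norm_fst_le p) (norm_snd_le p) (abs_nonneg _) (norm_nonneg _)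

lemma isQuadraticMeanLT_dualWeight_mul_mul {ε : ℝ} (hε : 0 < ε) :
    IsQuadraticMeanLT γ₂ (fun p => dualWeight p.1 * (p.1 * p.2)) ε where
  measurable := by fun_prop
  abs_le_sq p := (abs_dualWeight_mul_le _ _).trans (abs_fst_mul_snd_le_sq_norm p)
  integral_lt := by
    simp_rw [← mul_assoc]
    rwa [integral_prod_mul (fun g => dualWeight g * g) fun h : ℝ => h, integral_id_gaussianReal,
      mul_zero]

lemma isQuadraticMeanLT_neg_dualWeight_mul_mul {ε : ℝ} (hε : 0 < ε) :
    IsQuadraticMeanLT γ₂ (fun p => -(dualWeight p.1 * (p.1 * p.2))) ε where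
  measurable := by fun_prop
  abs_le_sq p := by simpa using (isQuadraticMeanLT_dualWeight_mul_mul hε).abs_le_sq p
  integral_lt := by
    simp_rw [integral_neg, ← mul_assoc]
    rwa [integral_prod_mul (fun g => dualWeight g * g) fun h : ℝ => h, integral_id_gaussianReal,
      mul_zero, neg_zero]

lemma isQuadraticMeanLT_neg_abs_mul_abs {δ : ℝ} (hδ : δ < (∫ g, |g| ∂(gaussianReal 0 1)) ^ 2) :
    IsQuadraticMeanLT γ₂ (fun p => -(|p.1| * |p.2|)) (-δ) where
  measurable := by fun_prop
  abs_le_sq p := by simpa [abs_mul] using abs_fst_mul_snd_le_sq_norm p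
  integral_lt := by
    rwa [integral_neg, integral_prod_mul (fun g : ℝ => |g|) fun h : ℝ => |h|, neg_lt_neg_iff, ← sq]

lemma eventually_measureReal_not_isGoodDirection_le {δ ε : ℝ}
    (hδ : δ < -∫ g, dualWeight g ∂(gaussianReal 0 1))
    (hδ' : δ < (∫ g, |g| ∂(gaussianReal 0 1)) ^ 2) (hε : 0 < ε) :
    ∀ᶠ κ in 𝓝[>] (0 : ℝ), ∀ m : ℕ,
      (Measure.pi fun _ : Fin m => γ₂).real
          {p | ¬ IsGoodDirection (fun ℓ => dualWeight (p ℓ).1) (WithLp.toLp 2 fun ℓ => (p ℓ).1)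
            (WithLp.toLp 2 fun ℓ => (p ℓ).2) δ ε} ≤
        5 * Real.exp (-κ * m) := by
  have hmean (j : Fin 5) : IsQuadraticMeanLT γ₂
      (![fun p => p.2 ^ 2, fun p => dualWeight p.1 * p.2 ^ 2,
        fun p => dualWeight p.1 * (p.1 * p.2), fun p => -(dualWeight p.1 * (p.1 * p.2)),
        fun p => -(|p.1| * |p.2|)] j) (![4, -δ, ε, ε, -δ] j) := by
    fin_cases j
    exacts [isQuadraticMeanLT_sq_snd, isQuadraticMeanLT_dualWeight_mul_sq_snd hδ,
      isQuadraticMeanLT_dualWeight_mul_mul hε, isQuadraticMeanLT_neg_dualWeight_mul_mul hε,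
      isQuadraticMeanLT_neg_abs_mul_abs hδ']
  filter_upwards [eventually_measureReal_pi_exists_mul_le_sum_le hmean] with κ hκ m
  refine (measureReal_mono fun p => ?_).trans (hκ m)
  contrapose!
  intro hp
  obtain ⟨hsq, hweight, hcross, hcross', habs⟩ :
      ∑ ℓ, (p ℓ).2 ^ 2 < 4 * m ∧ ∑ ℓ, dualWeight (p ℓ).1 * (p ℓ).2 ^ 2 < -δ * m ∧
      ∑ ℓ, dualWeight (p ℓ).1 * ((p ℓ).1 * (p ℓ).2) < ε * m ∧
      ∑ ℓ, -(dualWeight (p ℓ).1 * ((p ℓ).1 * (p ℓ).2)) < ε * m ∧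
      ∑ ℓ, -(|(p ℓ).1| * |(p ℓ).2|) < -δ * m := by
    simpa [Fin.exists_fin_succ] using hp
  rw [Finset.sum_neg_distrib] at hcross' habs
  refine not_not.2 ⟨norm_le_two_mul_sqrt hsq.le, ?_, abs_le.2 ⟨?_, hcross.le⟩, ?_⟩
  · simpa [sq] using hweight.le
  · simpa using (neg_lt.1 hcross').le
  · simpa using habs.le

end Product

end GoodDirections

section Nets

lemma packingNumber_ne_top_of_isCompact {X : Type*} [PseudoEMetricSpace X] {η : ℝ≥0} (hη : η ≠ 0)
    {s : Set X} (hs : IsCompact s) : Metric.packingNumber η s ≠ ⊤ := by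
  have hη2 : η / 2 ≠ 0 := div_ne_zero hη two_ne_zero
  obtain ⟨N, -, hfin, hN⟩ := Metric.exists_finite_isCover_of_isCompact hη2 hs
  refine ne_top_of_le_ne_top (Set.encard_ne_top_iff.2 hfin) ?_
  calc
    Metric.packingNumber η s = Metric.packingNumber (2 * (η / 2)) s := by
      rw [mul_div_cancel₀ _ two_ne_zero]
    _ ≤ Metric.externalCoveringNumber (η / 2) s :=
      Metric.packingNumber_two_mul_le_externalCoveringNumber _ _
    _ ≤ N.encard := hN.externalCoveringNumber_le_encard

variable {F : Type*} [NormedAddCommGroup F] [NormedSpace ℝ F] [FiniteDimensional ℝ F]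

lemma card_le_of_isSeparated_of_subset_closedBall {η : ℝ≥0} (hη : 0 < η) {s : Finset F}
    (hs : (s : Set F) ⊆ Metric.closedBall 0 1) (hsep : Metric.IsSeparated η (s : Set F)) :
    (s.card : ℝ) ≤ (1 + 2 / η) ^ finrank ℝ F := by
  borelize F
  let μ : Measure F := Measure.addHaar
  have hη' : (0 : ℝ) < η := hη
  have hball (v : F) {r : ℝ} (hr : 0 < r) :
      μ.real (Metric.ball v r) = r ^ finrank ℝ F * μ.real (Metric.ball 0 1) := by
    simp [measureReal_def, Measure.addHaar_ball_of_pos μ v hr, hr.le]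
  have hdisj : (s : Set F).PairwiseDisjoint fun v => Metric.ball v (η / 2 : ℝ) := by
    intro v hv w hw hvw
    have hlt : (η : ℝ≥0∞) < edist v w := hsep hv hw hvw
    rw [edist_nndist, ENNReal.coe_lt_coe, ← NNReal.coe_lt_coe, coe_nndist] at hlt
    exact Metric.ball_disjoint_ball (by linarith)
  have hsub : ⋃ v ∈ s, Metric.ball v (η / 2 : ℝ) ⊆ Metric.ball 0 (1 + η / 2) :=
    Set.iUnion₂_subset fun v hv => Metric.ball_subset_ball' <| by
      linarith [Metric.mem_closedBall.1 (hs hv)]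
  have hvol : s.card * (η / 2 : ℝ) ^ finrank ℝ F * μ.real (Metric.ball 0 1) ≤
      (1 + η / 2 : ℝ) ^ finrank ℝ F * μ.real (Metric.ball 0 1) := by
    calc
      _ = ∑ v ∈ s, μ.real (Metric.ball v (η / 2 : ℝ)) := by
        simp [hball _ (half_pos hη'), mul_assoc]
      _ = μ.real (⋃ v ∈ s, Metric.ball v (η / 2 : ℝ)) :=
        (measureReal_biUnion_finset hdisj fun _ _ => measurableSet_ball).symm
      _ ≤ μ.real (Metric.ball 0 (1 + η / 2)) := measureReal_mono hsub
      _ = _ := hball 0 (by positivity)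
  have hunit : 0 < μ.real (Metric.ball 0 1) :=
    ENNReal.toReal_pos (Metric.measure_ball_pos μ 0 one_pos).ne' measure_ball_lt_top.ne
  calc
    (s.card : ℝ) ≤ (1 + η / 2 : ℝ) ^ finrank ℝ F / (η / 2 : ℝ) ^ finrank ℝ F := by
      rw [le_div_iff₀ (by positivity)]
      exact le_of_mul_le_mul_right hvol hunit
    _ = (1 + 2 / η) ^ finrank ℝ F := by
      rw [← div_pow]
      congr 1
      field_simp
      ring

lemma exists_isCover_sphere {η : ℝ≥0} (hη : 0 < η) :
    ∃ N : Finset F, (N.card : ℝ) ≤ (1 + 2 / η) ^ finrank ℝ F ∧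
      (N : Set F) ⊆ Metric.sphere 0 1 ∧ Metric.IsCover η (Metric.sphere 0 1) (N : Set F) := by
  have htop : Metric.packingNumber η (Metric.sphere (0 : F) 1) ≠ ⊤ :=
    packingNumber_ne_top_of_isCompact hη.ne' (isCompact_sphere 0 1)
  have hfin : (Metric.maximalSeparatedSet η (Metric.sphere (0 : F) 1)).Finite := by
    rwa [← Set.encard_ne_top_iff, Metric.encard_maximalSeparatedSet htop]
  have hsub : Metric.maximalSeparatedSet η (Metric.sphere (0 : F) 1) ⊆ Metric.sphere 0 1 :=
    Metric.maximalSeparatedSet_subset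
  refine ⟨hfin.toFinset, card_le_of_isSeparated_of_subset_closedBall hη ?_ ?_, ?_, ?_⟩
  all_goals rw [hfin.coe_toFinset]
  · exact hsub.trans Metric.sphere_subset_closedBall
  · exact Metric.isSeparated_maximalSeparatedSet
  · exact hsub
  · exact Metric.isCover_maximalSeparatedSet htop

end Nets

section NetExtension

variable {F : Type*} [NormedAddCommGroup F] {η : ℝ≥0} {N : Set F}

lemma exists_mem_norm_sub_le_of_isCover_sphere (hN : Metric.IsCover η (Metric.sphere 0 1) N)
    {w : F} (hw : ‖w‖ = 1) : ∃ v ∈ N, ‖w - v‖ ≤ η := by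
  obtain ⟨v, hv, hwv⟩ := hN (mem_sphere_zero_iff_norm.2 hw)
  have hedist : edist w v ≤ η := hwv
  rw [edist_nndist, ENNReal.coe_le_coe, ← NNReal.coe_le_coe, coe_nndist, dist_eq_norm] at hedist
  exact ⟨v, hv, hedist⟩

variable [NormedSpace ℝ F] {p : Seminorm ℝ F} {L C : ℝ}

lemma exists_norm_eq_one_norm_smul_eq {v : F} (hv : v ≠ 0) : ∃ w : F, ‖w‖ = 1 ∧ ‖v‖ • w = v :=
  ⟨‖v‖⁻¹ • v, by simp [norm_smul, hv], smul_inv_smul₀ (norm_ne_zero_iff.2 hv) v⟩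

lemma seminorm_le_of_isCover_sphere (hp : ∀ v, p v ≤ L * ‖v‖) (hL : 0 ≤ L)
    (hN : Metric.IsCover η (Metric.sphere 0 1) N) (hC : ∀ v ∈ N, p v ≤ C) (w : F) :
    p w ≤ (C + L * η) * ‖w‖ := by
  rcases eq_or_ne w 0 with rfl | hw
  · simp
  obtain ⟨e, he, hew⟩ := exists_norm_eq_one_norm_smul_eq hw
  obtain ⟨v, hv, hev⟩ := exists_mem_norm_sub_le_of_isCover_sphere hN he
  have hunit : p e ≤ C + L * η := by
    calc
      p e ≤ p v + p (e - v) := by simpa using map_add_le_add p v (e - v)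
      _ ≤ C + L * η := add_le_add (hC v hv) ((hp _).trans (by gcongr))
  rw [← hew, map_smul_eq_mul, norm_norm, hew, mul_comm]
  gcongr

lemma le_seminorm_of_isCover_sphere (hp : ∀ v, p v ≤ L * ‖v‖) (hL : 0 ≤ L)
    (hN : Metric.IsCover η (Metric.sphere 0 1) N) (hC : ∀ v ∈ N, C ≤ p v) (w : F) :
    (C - L * η) * ‖w‖ ≤ p w := by
  rcases eq_or_ne w 0 with rfl | hw
  · simp
  obtain ⟨e, he, hew⟩ := exists_norm_eq_one_norm_smul_eq hw
  obtain ⟨v, hv, hev⟩ := exists_mem_norm_sub_le_of_isCover_sphere hN he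
  have hunit : C - L * η ≤ p e := by
    have htri : p v ≤ p e + p (v - e) := by simpa using map_add_le_add p e (v - e)
    have herr : p (v - e) ≤ L * η := (hp _).trans (by rw [norm_sub_rev]; gcongr)
    linarith [hC v hv]
  rw [← hew, map_smul_eq_mul, norm_norm, hew, mul_comm]
  gcongr

lemma opNorm_le_of_isCover_sphere {G : Type*} [NormedAddCommGroup G] [NormedSpace ℝ G]
    {T : F →L[ℝ] G} (hη : η < 1) (hC₀ : 0 ≤ C) (hN : Metric.IsCover η (Metric.sphere 0 1) N)
    (hC : ∀ v ∈ N, ‖T v‖ ≤ C) : ‖T‖ ≤ C / (1 - η) := by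
  have hself : ‖T‖ ≤ C + ‖T‖ * η :=
    T.opNorm_le_bound (by positivity) fun w =>
      seminorm_le_of_isCover_sphere (p := (normSeminorm ℝ G).comp T.toLinearMap) T.le_opNorm
        (norm_nonneg T) hN hC w
  rw [le_div_iff₀ (sub_pos.2 (NNReal.coe_lt_one.2 hη))]
  linarith

end NetExtension

section DualCertificate

variable {F : Type*} [NormedAddCommGroup F] [NormedSpace ℝ F] {m : ℕ} {y : Fin m → ℝ}
  {g : EuclideanSpace ℝ (Fin m)} {T : F →L[ℝ] EuclideanSpace ℝ (Fin m)} {δ ε : ℝ}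

/-- An approximate dual certificate: `g` holds the measurements of the signal direction and `T`
measures the directions orthogonal to it. The certificate is the matrix `∑ ℓ, y ℓ a_ℓ a_ℓᵀ`; the
field `le_absPairing` is the stability of the measurements on the tangent space at the signal. -/
structure IsDualCertificate (y : Fin m → ℝ) (g : EuclideanSpace ℝ (Fin m))
    (T : F →L[ℝ] EuclideanSpace ℝ (Fin m)) (δ ε : ℝ) : Prop where
  norm_le : ‖g‖ ≤ 2 * √m
  opNorm_le : ‖T‖ ≤ 4 * √m
  le_form : δ * m ≤ weightedForm y g g
  form_self_nonpos : ∀ v, weightedForm y (T v) (T v) ≤ 0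
  abs_form_le : ∀ v, |weightedForm y g (T v)| ≤ ε * m * ‖v‖
  le_absPairing : ∀ v, δ * m * ‖v‖ ≤ absPairing g (T v)

lemma norm_mul_norm_apply_le (hg : ‖g‖ ≤ 2 * √m) (hT : ‖T‖ ≤ 4 * √m) (v : F) :
    ‖g‖ * ‖T v‖ ≤ 8 * m * ‖v‖ :=
  calc
    ‖g‖ * ‖T v‖ ≤ 2 * √m * (4 * √m * ‖v‖) := by gcongr; exact T.le_of_opNorm_le hT v
    _ = 8 * √m ^ 2 * ‖v‖ := by ring
    _ = 8 * m * ‖v‖ := by rw [Real.sq_sqrt (by positivity)]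

section Net

variable {η : ℝ≥0} {N : Set F}

lemma weightedForm_self_nonpos_of_isCover_sphere (hy : ∀ ℓ, |y ℓ| ≤ 1) (hT : ‖T‖ ≤ 4 * √m)
    (hη : 24 * η ≤ δ) (hN : Metric.IsCover η (Metric.sphere 0 1) N)
    (hTN : ∀ v ∈ N, ‖T v‖ ≤ 2 * √m)
    (hform : ∀ v ∈ N, weightedForm y (T v) (T v) ≤ -(δ * m)) (w : F) :
    weightedForm y (T w) (T w) ≤ 0 := by
  rcases eq_or_ne w 0 with rfl | hw
  · simp
  obtain ⟨e, he, hew⟩ := exists_norm_eq_one_norm_smul_eq hw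
  obtain ⟨v, hv, hev⟩ := exists_mem_norm_sub_le_of_isCover_sphere hN he
  have hm : √m ^ 2 = m := Real.sq_sqrt (by positivity)
  have hTe : ‖T e‖ ≤ 4 * √m := by simpa [he] using T.le_of_opNorm_le hT e
  have hTev : ‖T (e - v)‖ ≤ 4 * √m * η := T.le_of_opNorm_le_of_le hT hev
  have hleft : weightedForm y (T (e - v)) (T e) ≤ 16 * η * m :=
    calc
      _ ≤ ‖T (e - v)‖ * ‖T e‖ := (le_abs_self _).trans (abs_weightedForm_le_norm_mul_norm hy _ _)
      _ ≤ 4 * √m * η * (4 * √m) := by gcongr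
      _ = 16 * η * m := by linear_combination 16 * η * hm
  have hright : weightedForm y (T v) (T (e - v)) ≤ 8 * η * m :=
    calc
      _ ≤ ‖T v‖ * ‖T (e - v)‖ := (le_abs_self _).trans (abs_weightedForm_le_norm_mul_norm hy _ _)
      _ ≤ 2 * √m * (4 * √m * η) := by gcongr; exact hTN v hv
      _ = 8 * η * m := by linear_combination 8 * η * hm
  have hunit : weightedForm y (T e) (T e) ≤ 0 :=
    calc
      _ = weightedForm y (T v) (T v) + weightedForm y (T (e - v)) (T e) +
          weightedForm y (T v) (T (e - v)) := by
        simp only [map_sub, LinearMap.sub_apply]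
        ring
      _ ≤ -(δ * m) + 16 * η * m + 8 * η * m := by gcongr; exact hform v hv
      _ = (24 * η - δ) * m := by ring
      _ ≤ 0 := mul_nonpos_of_nonpos_of_nonneg (sub_nonpos.2 hη) (by positivity)
  rw [← hew]
  simp only [map_smul, LinearMap.smul_apply, smul_eq_mul]
  exact mul_nonpos_of_nonneg_of_nonpos (norm_nonneg w)
    (mul_nonpos_of_nonneg_of_nonpos (norm_nonneg w) hunit)

lemma IsGoodCenter.isDualCertificate_of_isCover_sphere (hg : IsGoodCenter y g δ)
    (hy : ∀ ℓ, |y ℓ| ≤ 1) (hη : 24 * η ≤ δ) (hδ : δ ≤ 1)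
    (hN : Metric.IsCover η (Metric.sphere 0 1) N)
    (hTN : ∀ v ∈ N, IsGoodDirection y g (T v) δ η) :
    IsDualCertificate y g T (δ / 2) (9 * η) := by
  have hη' : (η : ℝ) ≤ 1 / 2 := by linarith
  have hT : ‖T‖ ≤ 4 * √m :=
    calc
      ‖T‖ ≤ 2 * √m / (1 - η) :=
        opNorm_le_of_isCover_sphere (NNReal.coe_lt_coe.1 (hη'.trans_lt (by norm_num)))
          (by positivity) hN fun v hv => (hTN v hv).norm_le
      _ ≤ 2 * √m / (1 / 2) := by gcongr; linarith
      _ = 4 * √m := by ring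
  have hgT := norm_mul_norm_apply_le hg.norm_le hT
  have hm : (0 : ℝ) ≤ 8 * m := by positivity
  refine ⟨hg.norm_le, hT, ?_, ?_, fun v => ?_, fun v => ?_⟩
  · refine le_trans ?_ hg.le_form
    gcongr
    linarith [η.coe_nonneg]
  · exact weightedForm_self_nonpos_of_isCover_sphere hy hT hη hN (fun v hv => (hTN v hv).norm_le)
      fun v hv => (hTN v hv).form_self_le
  · calc
      _ ≤ (η * m + 8 * m * η) * ‖v‖ :=
        seminorm_le_of_isCover_sphere
          (p := (normSeminorm ℝ ℝ).comp (weightedForm y g ∘ₗ T.toLinearMap))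
          (fun v => (abs_weightedForm_le_norm_mul_norm hy _ _).trans (hgT v)) hm hN
          (fun v hv => (hTN v hv).abs_form_le) v
      _ = 9 * η * m * ‖v‖ := by ring
  · calc
      δ / 2 * m * ‖v‖ ≤ (δ * m - 8 * m * η) * ‖v‖ := by
        gcongr
        nlinarith [mul_le_mul_of_nonneg_right hη (Nat.cast_nonneg (α := ℝ) m)]
      _ ≤ absPairing g (T v) :=
        le_seminorm_of_isCover_sphere (p := (absPairing g).comp T.toLinearMap)
          (fun v => (absPairing_le_norm_mul_norm _ _).trans (hgT v)) hm hN
          (fun v hv => (hTN v hv).le_absPairing) v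

end Net

namespace IsDualCertificate

variable {κ : Type*} [Fintype κ] {w : κ → F} {v : F} {t : ℝ}

lemma mul_le_of_measurements_eq (h : IsDualCertificate y g T δ ε) (hm : 0 < m) (ht : 0 ≤ t)
    (heq : ∀ ℓ, ∑ k, T (w k) ℓ ^ 2 + 2 * (g ℓ * T v ℓ) = t * g ℓ ^ 2) :
    δ * t ≤ 2 * ε * ‖v‖ := by
  have hsum : ∑ k, weightedForm y (T (w k)) (T (w k)) + 2 * weightedForm y g (T v) =
      t * weightedForm y g g := by
    simp only [weightedForm_apply, ← sq]
    rw [Finset.sum_comm, Finset.mul_sum, Finset.mul_sum, ← Finset.sum_add_distrib]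
    refine Finset.sum_congr rfl fun ℓ _ => ?_
    rw [← Finset.mul_sum]
    linear_combination y ℓ * heq ℓ
  refine le_of_mul_le_mul_right ?_ (Nat.cast_pos.2 hm)
  calc
    δ * t * m = t * (δ * m) := by ring
    _ ≤ t * weightedForm y g g := by gcongr; exact h.le_form
    _ ≤ 2 * weightedForm y g (T v) := by
      rw [← hsum]
      simpa using Finset.sum_nonpos fun k _ => h.form_self_nonpos (w k)
    _ ≤ 2 * (ε * m * ‖v‖) := by gcongr; exact (le_abs_self _).trans (h.abs_form_le v)
    _ = 2 * ε * ‖v‖ * m := by ring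

lemma mul_norm_le_of_measurements_eq (h : IsDualCertificate y g T δ ε) (hm : 0 < m)
    (hw : ∑ k, ‖w k‖ ^ 2 ≤ t)
    (heq : ∀ ℓ, ∑ k, T (w k) ℓ ^ 2 + 2 * (g ℓ * T v ℓ) = t * g ℓ ^ 2) :
    δ * ‖v‖ ≤ 10 * t := by
  have ht : 0 ≤ t := (Finset.sum_nonneg fun k _ => by positivity).trans hw
  have hm' : √m ^ 2 = m := Real.sq_sqrt (by positivity)
  have hpair : 2 * absPairing g (T v) ≤ t * ‖g‖ ^ 2 + ∑ k, ‖T (w k)‖ ^ 2 := by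
    simp only [absPairing_apply, EuclideanSpace.real_norm_sq_eq]
    rw [Finset.sum_comm, Finset.mul_sum, Finset.mul_sum, ← Finset.sum_add_distrib]
    refine Finset.sum_le_sum fun ℓ _ => ?_
    have hsq : 0 ≤ ∑ k, T (w k) ℓ ^ 2 := Finset.sum_nonneg fun k _ => sq_nonneg _
    have htsq : 0 ≤ t * g ℓ ^ 2 := by positivity
    have habs : |g ℓ * T v ℓ| ≤ (t * g ℓ ^ 2 + ∑ k, T (w k) ℓ ^ 2) / 2 :=
      abs_le.2 ⟨by linarith [heq ℓ], by linarith [heq ℓ]⟩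
    rw [← abs_mul]
    linarith
  refine le_of_mul_le_mul_right ?_ (Nat.cast_pos.2 hm)
  have hTw : ∑ k, ‖T (w k)‖ ^ 2 ≤ 16 * m * t :=
    calc
      _ ≤ ∑ k, (4 * √m * ‖w k‖) ^ 2 := by
        gcongr with k
        exact T.le_of_opNorm_le h.opNorm_le _
      _ = 16 * m * ∑ k, ‖w k‖ ^ 2 := by
        simp only [mul_pow, hm', ← Finset.mul_sum]
        norm_num
      _ ≤ 16 * m * t := by gcongr
  have hg : ‖g‖ ^ 2 ≤ 4 * m :=
    calc
      ‖g‖ ^ 2 ≤ (2 * √m) ^ 2 := by gcongr; exact h.norm_le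
      _ = 4 * (m : ℝ) := by rw [mul_pow, hm']; norm_num
  nlinarith [h.le_absPairing v, mul_le_mul_of_nonneg_left hg ht]

lemma eq_zero_of_measurements_eq (h : IsDualCertificate y g T δ ε) (hm : 0 < m) (hδ : 0 < δ)
    (hε : 0 ≤ ε) (hεδ : 20 * ε < δ ^ 2) (hw : ∑ k, ‖w k‖ ^ 2 ≤ t)
    (heq : ∀ ℓ, ∑ k, T (w k) ℓ ^ 2 + 2 * (g ℓ * T v ℓ) = t * g ℓ ^ 2) : t = 0 := by
  have ht : 0 ≤ t := (Finset.sum_nonneg fun k _ => by positivity).trans hw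
  have hchain : δ ^ 2 * t ≤ 20 * ε * t :=
    calc
      δ ^ 2 * t = δ * (δ * t) := by ring
      _ ≤ δ * (2 * ε * ‖v‖) :=
        mul_le_mul_of_nonneg_left (h.mul_le_of_measurements_eq hm ht heq) hδ.le
      _ = 2 * ε * (δ * ‖v‖) := by ring
      _ ≤ 2 * ε * (10 * t) :=
        mul_le_mul_of_nonneg_left (h.mul_norm_le_of_measurements_eq hm hw heq) (by positivity)
      _ = 20 * ε * t := by ring
  by_contra hne
  exact hεδ.not_ge (le_of_mul_le_mul_right hchain (ht.lt_of_ne' hne))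

end IsDualCertificate

end DualCertificate

section FactoredRecovery

variable {E : Type*} [NormedAddCommGroup E] [InnerProductSpace ℝ E] {m : ℕ} {u : E}

/-- The linear measurements `v ↦ (⟪a ℓ, v⟫)_ℓ` underlying the phaseless ones. -/
def measurementMap {ι : Type*} [Fintype ι] (a : ι → E) : E →L[ℝ] EuclideanSpace ℝ ι :=
  (EuclideanSpace.equiv ι ℝ).symm ∘L ContinuousLinearMap.pi fun ℓ => innerSL ℝ (a ℓ)

@[simp]
lemma measurementMap_apply {ι : Type*} [Fintype ι] (a : ι → E) (v : E) (ℓ : ι) :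
    measurementMap a v ℓ = ⟪a ℓ, v⟫ := rfl

lemma exists_mem_orthogonal_eq_inner_smul_add (hu : ‖u‖ = 1) (b : E) :
    ∃ w : (ℝ ∙ u)ᗮ, b = ⟪u, b⟫ • u + w :=
  ⟨⟨b - ⟪u, b⟫ • u, Submodule.mem_orthogonal_singleton_iff_inner_right.2 (by
    simp [inner_sub_right, inner_smul_right, hu])⟩, by simp⟩

lemma norm_smul_add_mem_orthogonal_sq (hu : ‖u‖ = 1) (r : ℝ) (w : (ℝ ∙ u)ᗮ) :
    ‖r • u + w‖ ^ 2 = r ^ 2 + ‖w‖ ^ 2 := by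
  have huw : ⟪u, (w : E)⟫ = 0 := Submodule.mem_orthogonal_singleton_iff_inner_right.1 w.2
  rw [norm_add_sq_real, inner_smul_left, huw, norm_smul, hu]
  simp

lemma IsDualCertificate.sum_inner_mul_inner_eq {a : Fin m → E} {y : Fin m → ℝ} {δ ε s : ℝ}
    (h : IsDualCertificate y (measurementMap a u) (measurementMap a ∘L (ℝ ∙ u)ᗮ.subtypeL) δ ε)
    (hu : ‖u‖ = 1) (hm : 0 < m) (hδ : 0 < δ) (hε : 0 ≤ ε) (hεδ : 20 * ε < δ ^ 2)
    {κ : Type*} [Fintype κ] {b : κ → E} (hb : ∑ k, ‖b k‖ ^ 2 ≤ s)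
    (hmeas : ∀ ℓ, ∑ k, ⟪a ℓ, b k⟫ ^ 2 = s * ⟪a ℓ, u⟫ ^ 2) (p q : E) :
    ∑ k, ⟪p, b k⟫ * ⟪q, b k⟫ = s * (⟪p, u⟫ * ⟪q, u⟫) := by
  choose w hw using exists_mem_orthogonal_eq_inner_smul_add hu
  set β : κ → ℝ := fun k => ⟪u, b k⟫
  have hbw (k : κ) : b k = β k • u + w (b k) := hw (b k)
  have hnorm : ∑ k, ‖w (b k)‖ ^ 2 ≤ s - ∑ k, β k ^ 2 := by
    have hpyth (k : κ) : ‖b k‖ ^ 2 = β k ^ 2 + ‖w (b k)‖ ^ 2 := by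
      rw [← norm_smul_add_mem_orthogonal_sq hu, ← hbw]
    simp only [hpyth, Finset.sum_add_distrib] at hb
    linarith
  have hzero : s - ∑ k, β k ^ 2 = 0 := by
    refine h.eq_zero_of_measurements_eq hm hδ hε hεδ hnorm (v := ∑ k, β k • w (b k)) fun ℓ => ?_
    have hinner (k : κ) : ⟪a ℓ, b k⟫ = β k * ⟪a ℓ, u⟫ + ⟪a ℓ, (w (b k) : E)⟫ := by
      rw [← inner_smul_right, ← inner_add_right, ← hbw]
    have hv : ⟪a ℓ, ((∑ k, β k • w (b k) : (ℝ ∙ u)ᗮ) : E)⟫ =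
        ∑ k, β k * ⟪a ℓ, (w (b k) : E)⟫ := by
      simp [inner_sum, inner_smul_right]
    simp only [ContinuousLinearMap.comp_apply, Submodule.subtypeL_apply, measurementMap_apply, hv]
    rw [sub_mul, ← hmeas ℓ, Finset.mul_sum, Finset.mul_sum, Finset.sum_mul,
      ← Finset.sum_add_distrib, ← Finset.sum_sub_distrib]
    refine Finset.sum_congr rfl fun k _ => ?_
    rw [hinner]
    ring
  have hw0 (k : κ) : w (b k) = 0 := by
    have hsum : ∑ k, ‖w (b k)‖ ^ 2 = 0 :=
      (hnorm.trans_eq hzero).antisymm (Finset.sum_nonneg fun k _ => by positivity)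
    simpa using (Finset.sum_eq_zero_iff_of_nonneg fun k _ => by positivity).1 hsum k
  have hbu (k : κ) : b k = β k • u := by simpa [hw0] using hbw k
  rw [sub_eq_zero.1 hzero, Finset.sum_mul]
  refine Finset.sum_congr rfl fun k _ => ?_
  rw [hbu, inner_smul_right, inner_smul_right]
  ring

end FactoredRecovery

section PhaseLift

/-- `x xᵀ` is the unique solution of the PhaseLift problem for the measurement vectors `a`: every
other feasible matrix has larger trace. -/
def PhaseLiftRecovers {ι κ : Type*} [Fintype κ] (a : ι → κ → ℝ) (x : κ → ℝ) : Prop :=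
  ∀ Z : Matrix κ κ ℝ, Z.PosSemidef →
    (∀ ℓ, ∑ i, ∑ j, a ℓ i * a ℓ j * Z i j = (∑ i, a ℓ i * x i) ^ 2) →
    Z ≠ Matrix.vecMulVec x x → (Matrix.vecMulVec x x).trace < Z.trace

lemma phaseLiftRecovers_zero {ι κ : Type*} [Fintype κ] (a : ι → κ → ℝ) :
    PhaseLiftRecovers a 0 := by
  intro Z hZ _ hne
  rw [Matrix.zero_vecMulVec] at hne ⊢
  rw [Matrix.trace_zero]
  exact hZ.trace_nonneg.lt_of_ne' fun h => hne (hZ.trace_eq_zero_iff.1 h)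

section Factorization

variable {κ σ : Type*} [Fintype σ]

/-- The positive semidefinite matrix `∑ k, b k (b k)ᵀ` with factors `b`. -/
def sumOuter (b : σ → EuclideanSpace ℝ κ) : Matrix κ κ ℝ :=
  ∑ k, Matrix.vecMulVec (b k) (b k)

lemma sumOuter_apply (b : σ → EuclideanSpace ℝ κ) (i j : κ) :
    sumOuter b i j = ∑ k, b k i * b k j := by
  simp [sumOuter, Matrix.sum_apply, Matrix.vecMulVec_apply]

lemma exists_eq_sumOuter [Finite κ] {Z : Matrix κ κ ℝ} (hZ : Z.PosSemidef) :
    ∃ (r : ℕ) (b : Fin r → EuclideanSpace ℝ κ), Z = sumOuter b := by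
  obtain ⟨r, b, hb⟩ := Matrix.posSemidef_iff_eq_sum_vecMulVec.1 hZ
  exact ⟨r, fun k => WithLp.toLp 2 (b k), by simpa [sumOuter] using hb⟩

variable [Fintype κ]

lemma trace_vecMulVec_self (x : EuclideanSpace ℝ κ) :
    (Matrix.vecMulVec x.ofLp x.ofLp).trace = ‖x‖ ^ 2 := by
  rw [Matrix.trace_vecMulVec, EuclideanSpace.real_norm_sq_eq]
  simp only [dotProduct, sq]

lemma trace_sumOuter (b : σ → EuclideanSpace ℝ κ) : (sumOuter b).trace = ∑ k, ‖b k‖ ^ 2 := by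
  simp only [sumOuter, Matrix.trace_sum, trace_vecMulVec_self]

lemma sum_sum_mul_sumOuter (b : σ → EuclideanSpace ℝ κ) (a : EuclideanSpace ℝ κ) :
    ∑ i, ∑ j, a i * a j * sumOuter b i j = ∑ k, ⟪a, b k⟫ ^ 2 :=
  calc
    _ = ∑ i, ∑ j, ∑ k, a i * b k i * (a j * b k j) := by
      simp only [sumOuter_apply, Finset.mul_sum, mul_mul_mul_comm]
    _ = ∑ k, ∑ i, ∑ j, a i * b k i * (a j * b k j) := Finset.sum_comm_cycle
    _ = ∑ k, ⟪a, b k⟫ ^ 2 := by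
      simp only [sq, PiLp.inner_apply, RCLike.inner_apply, conj_trivial, Finset.sum_mul_sum,
        mul_comm]

end Factorization

lemma phaseLiftRecovers_of_isDualCertificate {κ : Type*} [Fintype κ] {m : ℕ}
    {a : Fin m → EuclideanSpace ℝ κ} {u : EuclideanSpace ℝ κ} {y : Fin m → ℝ} {δ ε : ℝ}
    (h : IsDualCertificate y (measurementMap a u) (measurementMap a ∘L (ℝ ∙ u)ᗮ.subtypeL) δ ε)
    (hu : ‖u‖ = 1) (hm : 0 < m) (hδ : 0 < δ) (hε : 0 ≤ ε) (hεδ : 20 * ε < δ ^ 2) (r : ℝ) :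
    PhaseLiftRecovers (fun ℓ => (a ℓ).ofLp) (r • u).ofLp := by
  classical
  intro Z hZ hmeas hne
  obtain ⟨k, b, rfl⟩ := exists_eq_sumOuter hZ
  contrapose! hne
  rw [trace_vecMulVec_self, trace_sumOuter, norm_smul, hu, mul_one, Real.norm_eq_abs, sq_abs] at hne
  have hinner (ℓ : Fin m) : ∑ l, ⟪a ℓ, b l⟫ ^ 2 = r ^ 2 * ⟪a ℓ, u⟫ ^ 2 :=
    calc
      _ = (∑ i, a ℓ i * (r • u) i) ^ 2 := by rw [← sum_sum_mul_sumOuter, hmeas]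
      _ = ⟪a ℓ, r • u⟫ ^ 2 := by
        simp only [PiLp.inner_apply, RCLike.inner_apply, conj_trivial, mul_comm]
      _ = r ^ 2 * ⟪a ℓ, u⟫ ^ 2 := by rw [inner_smul_right, mul_pow]
  ext i j
  have hij := h.sum_inner_mul_inner_eq hu hm hδ hε hεδ hne hinner
    (EuclideanSpace.single i 1) (EuclideanSpace.single j 1)
  simp only [EuclideanSpace.inner_single_left, map_one, one_mul] at hij
  rw [sumOuter_apply, hij, Matrix.vecMulVec_apply, PiLp.smul_apply, PiLp.smul_apply]
  simp only [smul_eq_mul]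
  ring

end PhaseLift

section FailureProbability

section Measurements

variable {E : Type*} [NormedAddCommGroup E] [InnerProductSpace ℝ E] [FiniteDimensional ℝ E]
  [MeasurableSpace E] [BorelSpace E] {ι : Type*} [Fintype ι] {u w : E}

lemma measureReal_pi_stdGaussian_inner_mem_le (hu : ‖u‖ = 1) (S : Set (ι → ℝ)) :
    (Measure.pi fun _ : ι => stdGaussian E).real {a | (fun ℓ => ⟪a ℓ, u⟫) ∈ S} ≤
      (Measure.pi fun _ => gaussianReal 0 1).real S := by
  simpa only [map_inner_stdGaussian hu] using
    measureReal_pi_preimage_le (μ := stdGaussian E) (T := fun a => ⟪a, u⟫) (by fun_prop) S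

lemma measureReal_pi_stdGaussian_inner_prodMk_mem_le (hu : ‖u‖ = 1) (hw : ‖w‖ = 1)
    (huw : ⟪u, w⟫ = 0) (S : Set (ι → ℝ × ℝ)) :
    (Measure.pi fun _ : ι => stdGaussian E).real {a | (fun ℓ => (⟪a ℓ, u⟫, ⟪a ℓ, w⟫)) ∈ S} ≤
      (Measure.pi fun _ => (gaussianReal 0 1).prod (gaussianReal 0 1)).real S := by
  simpa only [map_inner_prodMk_inner_stdGaussian hu hw huw] using
    measureReal_pi_preimage_le (μ := stdGaussian E) (T := fun a => (⟪a, u⟫, ⟪a, w⟫))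
      (by fun_prop) S

end Measurements

instance isProbabilityMeasure_gaussianVectors (n m : ℕ) :
    IsProbabilityMeasure (gaussianVectors n m) := by
  unfold gaussianVectors
  infer_instance

lemma measureReal_gaussianVectors_toLp_mem_le (n m : ℕ)
    (S : Set (Fin m → EuclideanSpace ℝ (Fin n))) :
    (gaussianVectors n m).real {a | (fun ℓ => WithLp.toLp 2 (a ℓ)) ∈ S} ≤
      (Measure.pi fun _ => stdGaussian (EuclideanSpace ℝ (Fin n))).real S := by
  simpa only [gaussianVectors, map_pi_eq_stdGaussian] using
    measureReal_pi_preimage_le (μ := Measure.pi fun _ : Fin n => gaussianReal 0 1)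
      (T := WithLp.toLp 2) (by fun_prop) S

/-- The matrix `∑ ℓ, dualWeight ⟪a ℓ, u⟫ • a ℓ (a ℓ)ᵀ` is a dual certificate at the unit vector
`u`. -/
def HasDualCertificate {E : Type*} [NormedAddCommGroup E] [InnerProductSpace ℝ E] {m : ℕ}
    (a : Fin m → E) (u : E) (δ ε : ℝ) : Prop :=
  IsDualCertificate (fun ℓ => dualWeight ⟪a ℓ, u⟫) (measurementMap a u)
    (measurementMap a ∘L (ℝ ∙ u)ᗮ.subtypeL) δ ε

lemma eventually_measureReal_not_hasDualCertificate_le {δ : ℝ} {η : ℝ≥0} (hη : 0 < η)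
    (hηδ : 24 * η ≤ δ) (hδ : δ < -∫ g, dualWeight g ∂(gaussianReal 0 1))
    (hδ' : δ < (∫ g, |g| ∂(gaussianReal 0 1)) ^ 2) (hδ1 : δ ≤ 1) :
    ∀ᶠ κ in 𝓝[>] (0 : ℝ), ∀ (n m : ℕ) (u : EuclideanSpace ℝ (Fin n)), ‖u‖ = 1 →
      (Measure.pi fun _ : Fin m => stdGaussian (EuclideanSpace ℝ (Fin n))).real
          {a | ¬ HasDualCertificate a u (δ / 2) (9 * η)} ≤
        (2 + 5 * (1 + 2 / η) ^ n) * Real.exp (-κ * m) := by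
  filter_upwards [eventually_measureReal_not_isGoodCenter_le hδ,
    eventually_measureReal_not_isGoodDirection_le hδ hδ' (NNReal.coe_pos.2 hη)]
    with κ hcenter hdirection n m u hu
  obtain ⟨N, hcard, hNs, hN⟩ := exists_isCover_sphere (F := (ℝ ∙ u)ᗮ) hη
  have hcard' : (N.card : ℝ) ≤ (1 + 2 / η) ^ n := by
    refine hcard.trans (pow_le_pow_right₀ (le_add_of_nonneg_right (by positivity)) ?_)
    simpa using (ℝ ∙ u)ᗮ.finrank_le
  let y (a : Fin m → EuclideanSpace ℝ (Fin n)) (ℓ : Fin m) : ℝ := dualWeight ⟪a ℓ, u⟫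
  have hsub : {a | ¬ HasDualCertificate a u (δ / 2) (9 * η)} ⊆
      {a : Fin m → EuclideanSpace ℝ (Fin n) | ¬ IsGoodCenter (y a) (measurementMap a u) δ} ∪
        ⋃ v ∈ N, {a | ¬ IsGoodDirection (y a) (measurementMap a u) (measurementMap a v) δ η} := by
    intro a ha
    contrapose! ha
    simp only [Set.mem_union, Set.mem_iUnion, Set.mem_ofPred_eq, not_or, not_exists, not_not]
      at ha ⊢
    exact ha.1.isDualCertificate_of_isCover_sphere (fun _ => abs_dualWeight_le_one _) hηδ hδ1 hN
      ha.2
  calc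
    _ ≤ _ := measureReal_mono hsub
    _ ≤ _ := measureReal_union_le _ _
    _ ≤ 2 * Real.exp (-κ * m) + ∑ v ∈ N, 5 * Real.exp (-κ * m) := by
      gcongr
      · exact (measureReal_pi_stdGaussian_inner_mem_le hu _).trans (hcenter m)
      · refine (measureReal_biUnion_finset_le _ _).trans (Finset.sum_le_sum fun v hv => ?_)
        have hv1 : ‖(v : EuclideanSpace ℝ (Fin n))‖ = 1 := mem_sphere_zero_iff_norm.1 (hNs hv)
        have huv := Submodule.mem_orthogonal_singleton_iff_inner_right.1 v.2
        exact (measureReal_pi_stdGaussian_inner_prodMk_mem_le hu hv1 huv _).trans (hdirection m)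
    _ = (2 + 5 * N.card) * Real.exp (-κ * m) := by
      rw [Finset.sum_const, nsmul_eq_mul]
      ring
    _ ≤ _ := by gcongr

lemma measureReal_not_phaseLiftRecovers_le {n m : ℕ} {δ ε p : ℝ} (hm : 0 < m) (hδ : 0 < δ)
    (hε : 0 ≤ ε) (hεδ : 20 * ε < δ ^ 2) (hp : 0 ≤ p)
    (hcert : ∀ u : EuclideanSpace ℝ (Fin n), ‖u‖ = 1 →
      (Measure.pi fun _ : Fin m => stdGaussian (EuclideanSpace ℝ (Fin n))).real
        {a | ¬ HasDualCertificate a u δ ε} ≤ p) (x : Fin n → ℝ) :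
    (gaussianVectors n m).real {a | ¬ PhaseLiftRecovers a x} ≤ p := by
  rcases eq_or_ne (WithLp.toLp 2 x) 0 with hx | hx
  · obtain rfl : x = 0 := by simpa using hx
    simpa [phaseLiftRecovers_zero] using hp
  obtain ⟨u, hu, hux⟩ := exists_norm_eq_one_norm_smul_eq hx
  refine (measureReal_mono fun a => ?_).trans
    ((measureReal_gaussianVectors_toLp_mem_le n m _).trans (hcert u hu))
  refine mt fun h => ?_
  simpa only [hux] using
    phaseLiftRecovers_of_isDualCertificate h hu hm hδ hε hεδ ‖WithLp.toLp 2 x‖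

lemma exists_eventually_measureReal_not_phaseLiftRecovers_le :
    ∃ K > 1, ∀ᶠ κ in 𝓝[>] (0 : ℝ), ∀ (n m : ℕ) (x : Fin n → ℝ),
      (gaussianVectors n m).real {a | ¬ PhaseLiftRecovers a x} ≤
        (2 + 5 * K ^ n) * Real.exp (-κ * m) := by
  obtain ⟨δ, hδ0, hδ⟩ := exists_between (lt_min one_pos
    (lt_min (neg_pos.2 integral_dualWeight_neg) (sq_pos_of_pos integral_abs_gaussianReal_pos)))
  obtain ⟨hδ1, hδ, hδ'⟩ := by simpa only [lt_min_iff] using hδ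
  -- The certificate has parameters `δ / 2` and `9 * η`, so recovery needs `720 * η < δ ^ 2`.
  obtain ⟨η, hη⟩ : ∃ η : ℝ≥0, (η : ℝ) = δ ^ 2 / 800 := ⟨⟨δ ^ 2 / 800, by positivity⟩, rfl⟩
  have hη0 : 0 < η := NNReal.coe_pos.1 (hη ▸ by positivity)
  have hK : (1 : ℝ) < 1 + 2 / η := lt_add_of_pos_right _ (by positivity)
  refine ⟨1 + 2 / η, hK, ?_⟩
  filter_upwards [eventually_measureReal_not_hasDualCertificate_le hη0 (by nlinarith) hδ hδ' hδ1.le]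
    with κ hκ n m x
  rcases m.eq_zero_or_pos with rfl | hm
  · refine measureReal_le_one.trans ?_
    have hpow : 0 < (1 + 2 / η : ℝ) ^ n := by positivity
    simp only [Nat.cast_zero, mul_zero, Real.exp_zero, mul_one]
    linarith
  · exact measureReal_not_phaseLiftRecovers_le hm (half_pos hδ0) (by positivity)
      (by rw [hη]; nlinarith) (by positivity) (hκ n m) x

lemma mul_exp_le_of_mul_le {K κ : ℝ} (hK : 1 < K) (hκ : 0 < κ) {n m : ℕ}
    (hnm : 2 * Real.log K / κ * n ≤ m) :
    (2 + 5 * K ^ n) * Real.exp (-κ * m) ≤ 7 * Real.exp (-(κ / 2) * m) := by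
  have hpow : K ^ n ≤ Real.exp (κ / 2 * m) := by
    rw [← Real.log_le_iff_le_exp (by positivity), Real.log_pow]
    calc
      n * Real.log K = κ / 2 * (2 * Real.log K / κ * n) := by field_simp
      _ ≤ κ / 2 * m := by gcongr
  calc
    _ ≤ (2 * K ^ n + 5 * K ^ n) * Real.exp (-κ * m) := by
      gcongr
      exact le_mul_of_one_le_right zero_le_two (one_le_pow₀ hK.le)
    _ = 7 * (K ^ n * Real.exp (-κ * m)) := by ring
    _ ≤ 7 * (Real.exp (κ / 2 * m) * Real.exp (-κ * m)) := by gcongr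
    _ = 7 * Real.exp (-(κ / 2) * m) := by
      rw [← Real.exp_add]
      congr 2
      ring

end FailureProbability

/-- PhaseLift: for `m ≥ C n` standard Gaussian measurement vectors, with
probability at least `1 - C' e^{-c m}`, `X = x xᵀ` is the unique solution of
minimizing `trace Z` over PSD `Z` with `⟨a_ℓ a_ℓᵀ, Z⟩ = |a_ℓᵀ x|²` for all `ℓ`. -/
theorem phaselift_exact_recovery : ∃ C C' c : ℝ, 0 < C ∧ 0 < C' ∧ 0 < c ∧
    ∀ (n m : ℕ) (x : Fin n → ℝ), (C * n ≤ m) →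
      gaussianVectors n m
          {a : Fin m → Fin n → ℝ |
            ¬ ∀ Z : Matrix (Fin n) (Fin n) ℝ, Z.PosSemidef →
                (∀ ℓ, ∑ i, ∑ j, a ℓ i * a ℓ j * Z i j = (∑ i, a ℓ i * x i) ^ 2) →
                Z ≠ Matrix.vecMulVec x x →
                  (Matrix.vecMulVec x x).trace < Z.trace}
        ≤ ENNReal.ofReal (C' * Real.exp (-c * m)) := by
  obtain ⟨K, hK, htail⟩ := exists_eventually_measureReal_not_phaseLiftRecovers_le
  obtain ⟨κ, hfail, hκ⟩ := (htail.and self_mem_nhdsWithin).exists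
  have hκ : 0 < κ := hκ
  have hlog : 0 < Real.log K := Real.log_pos hK
  refine ⟨2 * Real.log K / κ, 7, κ / 2, by positivity, by norm_num, by positivity,
    fun n m x hnm => ?_⟩
  change gaussianVectors n m {a | ¬ PhaseLiftRecovers a x} ≤ _
  rw [← ofReal_measureReal]
  exact ENNReal.ofReal_le_ofReal ((hfail n m x).trans (mul_exp_le_of_mul_le hK hκ hnm))
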